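/- arXiv:1801.03189 — 2 statements merged into one kernel-verified Lean document; each statement's English description precedes it below -/
import Mathlib

section
/- Let A_1,…,A_k (k ≥ 1) be pairwise commuting V×V matrices with nonnegative integer entries, each with no zero row and no zero column, such that every strongly connected component is nontrivial and coordinatewise irreducible. Suppose D is a strongly connected component which is hereditary as a subset of V, and suppose that for every strongly connected component C and every i ∈ {1,…,k} there exist v ∈ C and w ∈ D with A_i(v,w) > 0. If there exists j ∈ {1,…,k} such that ρ(A_{C,j}) < ρ(A_{D,j}) for every strongly connected component C ≠ D, then ρ(A_{C,i}) < ρ(A_{D,i}) for every strongly connected component C ≠ D and every i ∈ {1,…,k}. -/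
open Matrix

variable {V : Type*} [Fintype V] [DecidableEq V]

/-- `Apow A n = ∏ i, (A i)^(n i)`, the vertex matrix counting paths of degree `n`. -/
def Apow {k : ℕ} (A : Fin k → Matrix V V ℕ) (n : Fin k → ℕ) : Matrix V V ℕ :=
  ((List.finRange k).map fun i => (A i) ^ (n i)).prod

/-- `v` reaches `w` if some `A^n` has a positive `(v, w)` entry. -/
def Reaches {k : ℕ} (A : Fin k → Matrix V V ℕ) (v w : V) : Prop :=
  ∃ n : Fin k → ℕ, 0 < Apow A n v w

/-- `C` is a strongly connected component: the equivalence class of some vertex `v`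
for the relation `v` reaches `w` and `w` reaches `v`. -/
def IsSCC {k : ℕ} (A : Fin k → Matrix V V ℕ) (C : Finset V) : Prop :=
  ∃ v : V, ∀ w : V, w ∈ C ↔ (Reaches A v w ∧ Reaches A w v)

/-- A component is nontrivial if it contains a vertex with a loop of nonzero degree. -/
def NontrivialComp {k : ℕ} (A : Fin k → Matrix V V ℕ) (C : Finset V) : Prop :=
  ∃ v ∈ C, ∃ n : Fin k → ℕ, n ≠ 0 ∧ 0 < Apow A n v v

/-- A component is coordinatewise irreducible if for each colour `i` and all `v, w ∈ C`
there is `m ≥ 1` with `(A_i^m)(v, w) > 0`. -/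
def CoordIrreducible {k : ℕ} (A : Fin k → Matrix V V ℕ) (C : Finset V) : Prop :=
  ∀ i : Fin k, ∀ v ∈ C, ∀ w ∈ C, ∃ m : ℕ, 1 ≤ m ∧ 0 < ((A i) ^ m) v w

/-- A subset `S` is hereditary if `v ∈ S` and `v` reaches `w` imply `w ∈ S`. -/
def Hereditary {k : ℕ} (A : Fin k → Matrix V V ℕ) (S : Finset V) : Prop :=
  ∀ v ∈ S, ∀ w : V, Reaches A v w → w ∈ S

/-- The spectral radius of a square matrix of natural numbers: the maximum modulus of
its complex eigenvalues. -/
noncomputable def specRadN {n : Type*} [Fintype n] [DecidableEq n] (M : Matrix n n ℕ) : ℝ :=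
  (spectralRadius ℂ (M.map (Nat.cast : ℕ → ℂ))).toReal

/-- `compRad A C i` is the spectral radius of the `C × C` submatrix of `A i`. -/
noncomputable def compRad {k : ℕ} (A : Fin k → Matrix V V ℕ) (C : Finset V) (i : Fin k) : ℝ :=
  specRadN ((A i).submatrix (fun c : {x // x ∈ C} => c.1) (fun c : {x // x ∈ C} => c.1))


namespace Dom

/-- Comparison of a nonnegative vector with a positive one. -/
lemma compare {n : Type*} [Fintype n] (w u : n → ℝ) (hw : ∀ v, 0 < w v)
    (hu : ∀ v, 0 ≤ u v) (hne : u ≠ 0) :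
    ∃ c : ℝ, 0 < c ∧ (∀ v, u v ≤ c * w v) ∧ ∃ v0, u v0 = c * w v0 := by
  obtain ⟨v1, hv1⟩ := Function.ne_iff.mp hne
  have hpos1 : 0 < u v1 := lt_of_le_of_ne (hu v1) (Ne.symm hv1)
  have : Nonempty n := ⟨v1⟩
  obtain ⟨v0, hv0⟩ := Finite.exists_max (fun v => u v / w v)
  refine ⟨u v0 / w v0, lt_of_lt_of_le (div_pos hpos1 (hw v1)) (hv0 v1), fun v => ?_, v0, ?_⟩
  · have := hv0 v
    rwa [div_le_iff₀ (hw v)] at this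
  · have := (hw v0).ne'
    field_simp

lemma mulVec_mono {n : Type*} [Fintype n] (M : Matrix n n ℝ) (hM : ∀ v w, 0 ≤ M v w)
    (x y : n → ℝ) (h : ∀ v, x v ≤ y v) (v : n) : (M *ᵥ x) v ≤ (M *ᵥ y) v :=
  Finset.sum_le_sum fun w _ => mul_le_mul_of_nonneg_left (h w) (hM v w)

lemma mulVec_nonneg {n : Type*} [Fintype n] (M : Matrix n n ℝ) (hM : ∀ v w, 0 ≤ M v w)
    (x : n → ℝ) (h : ∀ v, 0 ≤ x v) (v : n) : 0 ≤ (M *ᵥ x) v :=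
  Finset.sum_nonneg fun w _ => mul_nonneg (hM v w) (h w)

/-- If `M w = s w` with `w > 0` and `M u ≥ t u` with `u ≥ 0` nonzero then `t ≤ s`. -/
lemma le_of_super {n : Type*} [Fintype n] (M : Matrix n n ℝ) (hM : ∀ v w, 0 ≤ M v w)
    (w u : n → ℝ) (hw : ∀ v, 0 < w v) (s t : ℝ) (hs : M *ᵥ w = s • w)
    (hu : ∀ v, 0 ≤ u v) (hne : u ≠ 0) (ht : ∀ v, t * u v ≤ (M *ᵥ u) v) : t ≤ s := by
  obtain ⟨c, hc, hle, v0, hv0⟩ := compare w u hw hu hne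
  have h1 := mulVec_mono M hM u (c • w) (fun v => by simpa using hle v) v0
  rw [mulVec_smul, hs] at h1
  have h2 := ht v0
  simp only [Pi.smul_apply, smul_eq_mul] at h1
  rw [hv0] at h2
  have h3 : t * (c * w v0) ≤ s * (c * w v0) := by linarith
  exact le_of_mul_le_mul_right h3 (mul_pos hc (hw v0))

/-- A polynomial in an irreducible nonnegative matrix with positive entries. -/
lemma exists_pos {n : Type*} [Fintype n] [DecidableEq n] (M : Matrix n n ℝ)
    (hM : ∀ v w, 0 ≤ M v w) (hirr : ∀ v w, ∃ m : ℕ, 0 < (M ^ m) v w) :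
    ∃ P : Matrix n n ℝ, M * P = P * M ∧ (∀ v w, 0 < P v w) ∧
      ∀ (s : ℝ) (x : n → ℝ), M *ᵥ x = s • x → ∃ c : ℝ, P *ᵥ x = c • x := by
  choose m hm using hirr
  have hnn : ∀ k v w, 0 ≤ (M ^ k) v w := by
    intro k
    induction k with
    | zero => intro v w; rw [pow_zero, one_apply]; split_ifs <;> norm_num
    | succ k ih =>
      intro v w
      rw [pow_succ, mul_apply]
      exact Finset.sum_nonneg fun u _ => mul_nonneg (ih v u) (hM u w)
  let S : Finset ℕ := Finset.univ.image fun p : n × n => m p.1 p.2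
  refine ⟨∑ k ∈ S, M ^ k, ?_, ?_, ?_⟩
  · rw [Finset.mul_sum, Finset.sum_mul]
    exact Finset.sum_congr rfl fun k _ => by rw [← pow_succ, ← pow_succ']
  · intro v w
    rw [Matrix.sum_apply]
    refine Finset.sum_pos' (fun k _ => hnn k v w) ⟨m v w, ?_, hm v w⟩
    exact Finset.mem_image.mpr ⟨(v, w), Finset.mem_univ _, rfl⟩
  · intro s x hx
    have : ∀ k : ℕ, M ^ k *ᵥ x = s ^ k • x := by
      intro k
      induction k with
      | zero => simp
      | succ k ih => rw [pow_succ, ← mulVec_mulVec, hx, mulVec_smul, ih, smul_smul, pow_succ']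
    refine ⟨∑ k ∈ S, s ^ k, ?_⟩
    rw [sum_mulVec, Finset.sum_smul]
    exact Finset.sum_congr rfl fun k _ => this k

lemma pos_mulVec {n : Type*} [Fintype n] (P : Matrix n n ℝ) (hP : ∀ v w, 0 < P v w)
    (x : n → ℝ) (hx : ∀ v, 0 ≤ x v) (hne : x ≠ 0) (v : n) : 0 < (P *ᵥ x) v := by
  obtain ⟨v1, hv1⟩ := Function.ne_iff.mp hne
  have hpos1 : 0 < x v1 := lt_of_le_of_ne (hx v1) (Ne.symm hv1)
  exact Finset.sum_pos' (fun w _ => mul_nonneg (hP v w).le (hx w))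
    ⟨v1, Finset.mem_univ _, mul_pos (hP v v1) hpos1⟩

/-- Nonnegative nonzero eigenvectors of irreducible matrices are positive. -/
lemma eig_pos {n : Type*} [Fintype n] [DecidableEq n] (M : Matrix n n ℝ)
    (hM : ∀ v w, 0 ≤ M v w) (hirr : ∀ v w, ∃ m : ℕ, 0 < (M ^ m) v w)
    (s : ℝ) (x : n → ℝ) (hx : ∀ v, 0 ≤ x v) (hne : x ≠ 0) (hs : M *ᵥ x = s • x) (v : n) :
    0 < x v := by
  obtain ⟨P, -, hP, hc⟩ := exists_pos M hM hirr
  obtain ⟨c, hc⟩ := hc s x hs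
  have := pos_mulVec P hP x hx hne v
  rw [hc] at this
  refine lt_of_le_of_ne (hx v) fun h => ?_
  simp [← h] at this

/-- Existence of a positive eigenvector (Perron–Frobenius). -/
lemma perron {n : Type*} [Fintype n] [DecidableEq n] [Nonempty n] (M : Matrix n n ℝ)
    (hM : ∀ v w, 0 ≤ M v w) (hirr : ∀ v w, ∃ m : ℕ, 0 < (M ^ m) v w) :
    ∃ (s : ℝ) (x : n → ℝ), (∀ v, 0 < x v) ∧ M *ᵥ x = s • x := by
  let T : ℝ := ∑ v, ∑ w, M v w
  have hbound : ∀ (t : ℝ) (x : n → ℝ), x ∈ stdSimplex ℝ n → (∀ v, t * x v ≤ (M *ᵥ x) v) →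
      t ≤ T := by
    intro t x hx h
    have h1 : ∑ v, t * x v ≤ ∑ v, (M *ᵥ x) v := Finset.sum_le_sum fun v _ => h v
    rw [← Finset.mul_sum, hx.2, mul_one] at h1
    refine h1.trans (Finset.sum_le_sum fun v _ => Finset.sum_le_sum fun w _ => ?_)
    have hw : x w ≤ 1 := by
      rw [← hx.2]
      exact Finset.single_le_sum (fun i _ => hx.1 i) (Finset.mem_univ w)
    exact mul_le_of_le_one_right (hM v w) hw
  let K : Set (ℝ × (n → ℝ)) :=
    (Set.Icc 0 T ×ˢ stdSimplex ℝ n) ∩ {p | ∀ v, p.1 * p.2 v ≤ (M *ᵥ p.2) v}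
  have hK : IsCompact K := by
    refine (isCompact_Icc.prod (isCompact_stdSimplex ℝ n)).inter_right ?_
    simp only [Set.ofPred_forall]
    refine isClosed_iInter fun v => isClosed_le (by fun_prop) ?_
    simp only [mulVec, dotProduct]
    fun_prop
  have hKne : K.Nonempty := by
    obtain ⟨v⟩ := ‹Nonempty n›
    have h0 : ∀ w, 0 * (Pi.single v 1 : n → ℝ) w ≤ (M *ᵥ (Pi.single v 1 : n → ℝ)) w := by
      intro w
      rw [zero_mul]
      exact mulVec_nonneg M hM _ (single_mem_stdSimplex ℝ v).1 w
    exact ⟨(0, Pi.single v 1), ⟨⟨le_refl _, hbound 0 _ (single_mem_stdSimplex ℝ v) h0⟩,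
      single_mem_stdSimplex ℝ v⟩, h0⟩
  obtain ⟨⟨s, x⟩, ⟨⟨hsT, hx⟩, hsx⟩, hmax⟩ := hK.exists_isMaxOn hKne continuous_fst.continuousOn
  simp only [Set.mem_ofPred_eq] at hsx hsT hx
  have hxne : x ≠ 0 := by
    rintro rfl
    have := hx.2
    simp at this
  have key : M *ᵥ x = s • x := by
    by_contra hcon
    obtain ⟨P, hcomm, hP, -⟩ := exists_pos M hM hirr
    have hz := pos_mulVec P hP x hx.1 hxne
    have hd := pos_mulVec P hP (M *ᵥ x - s • x) (fun v => by simpa using hsx v)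
      (sub_ne_zero.mpr hcon)
    rw [mulVec_sub, mulVec_smul, mulVec_mulVec, ← hcomm, ← mulVec_mulVec] at hd
    set z := P *ᵥ x with hzdef
    obtain ⟨v0, hv0⟩ := Finite.exists_min (fun v => (M *ᵥ z) v / z v)
    set t := (M *ᵥ z) v0 / z v0 with htdef
    have hst : s < t := by
      have := hd v0
      simp only [Pi.sub_apply, Pi.smul_apply, smul_eq_mul] at this
      rw [htdef, lt_div_iff₀ (hz v0)]
      linarith
    have htz : ∀ v, t * z v ≤ (M *ᵥ z) v := fun v => by
      have := hv0 v
      rwa [le_div_iff₀ (hz v)] at this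
    have hsum : 0 < ∑ v, z v := Finset.sum_pos (fun v _ => hz v) Finset.univ_nonempty
    have hmem : (∑ v, z v)⁻¹ • z ∈ stdSimplex ℝ n := by
      refine ⟨fun v => ?_, ?_⟩
      · simp only [Pi.smul_apply, smul_eq_mul]
        have := hz v
        positivity
      · simp only [Pi.smul_apply, smul_eq_mul]
        rw [← Finset.mul_sum, inv_mul_cancel₀ hsum.ne']
    have hle : ∀ v, t * ((∑ v, z v)⁻¹ • z) v ≤ (M *ᵥ ((∑ v, z v)⁻¹ • z)) v := by
      intro v
      rw [mulVec_smul]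
      simp only [Pi.smul_apply, smul_eq_mul]
      have := mul_le_mul_of_nonneg_left (htz v) (inv_pos.mpr hsum).le
      linarith
    have hin : (t, (∑ v, z v)⁻¹ • z) ∈ K :=
      ⟨⟨⟨hsT.1.trans hst.le, hbound t _ hmem hle⟩, hmem⟩, hle⟩
    have : t ≤ s := hmax hin
    linarith
  exact ⟨s, x, eig_pos M hM hirr s x hx.1 hxne key, key⟩

/-- Uniqueness of the Perron eigenvector. -/
lemma perron_unique {n : Type*} [Fintype n] [DecidableEq n] [Nonempty n] (M : Matrix n n ℝ)
    (hM : ∀ v w, 0 ≤ M v w) (hirr : ∀ v w, ∃ m : ℕ, 0 < (M ^ m) v w)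
    (s : ℝ) (x y : n → ℝ) (hx : ∀ v, 0 < x v) (hs : M *ᵥ x = s • x) (hy : M *ᵥ y = s • y) :
    ∃ r : ℝ, y = r • x := by
  obtain ⟨v0, hv0⟩ := Finite.exists_min (fun v => y v / x v)
  refine ⟨y v0 / x v0, ?_⟩
  by_contra hne
  have h := eig_pos M hM hirr s (y - (y v0 / x v0) • x) (fun v => ?_) (sub_ne_zero.mpr hne) ?_ v0
  · have := (hx v0).ne'
    simp only [Pi.sub_apply, Pi.smul_apply, smul_eq_mul] at h
    field_simp at h
    linarith
  · have := hv0 v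
    rw [le_div_iff₀ (hx v)] at this
    simpa using this
  · rw [mulVec_sub, mulVec_smul, hs, hy, smul_sub, smul_comm]

/-- Strict subinvariance gives a strict bound on the Perron eigenvalue. -/
lemma lt_of_sub {n : Type*} [Fintype n] [DecidableEq n] (M : Matrix n n ℝ)
    (hM : ∀ v w, 0 ≤ M v w) (hirr : ∀ v w, ∃ m : ℕ, 0 < (M ^ m) v w)
    (w x : n → ℝ) (s r : ℝ) (hw : ∀ v, 0 < w v) (hs : M *ᵥ w = s • w)
    (hx : ∀ v, 0 ≤ x v) (hr : ∀ v, (M *ᵥ x) v ≤ r * x v) (v1 : n)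
    (h1 : (M *ᵥ x) v1 < r * x v1) : s < r := by
  have hxne : x ≠ 0 := by
    rintro rfl
    simp at h1
  obtain ⟨P, hcomm, hP, -⟩ := exists_pos M hM hirr
  have hz := pos_mulVec P hP x hx hxne
  have hd := pos_mulVec P hP (r • x - M *ᵥ x) (fun v => by simpa using hr v) (fun h => by
    have := congrFun h v1
    simp at this
    linarith)
  rw [mulVec_sub, mulVec_smul, mulVec_mulVec, ← hcomm, ← mulVec_mulVec] at hd
  set z := P *ᵥ x with hzdef
  obtain ⟨c, hc, hle, v0, hv0⟩ := compare z w hz (fun v => (hw v).le) (fun h => by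
    have := hw v1
    simp [h] at this)
  have h2 := mulVec_mono M hM w (c • z) (fun v => by simpa using hle v) v0
  rw [mulVec_smul, hs] at h2
  have h3 := hd v0
  simp only [Pi.sub_apply, Pi.smul_apply, smul_eq_mul] at h2 h3
  have h4 : c * (M *ᵥ z) v0 < c * (r * z v0) := mul_lt_mul_of_pos_left (by linarith) hc
  have h5 : s * w v0 < r * w v0 := by
    calc s * w v0 ≤ _ := h2
      _ < _ := h4
      _ = r * w v0 := by rw [hv0]; ring
  exact lt_of_mul_lt_mul_right h5 (hw v0).le

/-- Real version of a natural matrix. -/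
def toR {n : Type*} (M : Matrix n n ℕ) : Matrix n n ℝ := M.map (Nat.cast : ℕ → ℝ)

lemma toR_nonneg {n : Type*} (M : Matrix n n ℕ) (v w : n) : 0 ≤ toR M v w := by
  simp [toR]

lemma mem_spec {n : Type*} [Fintype n] [DecidableEq n] (M : Matrix n n ℂ) (l : ℂ) :
    l ∈ spectrum ℂ M ↔ ∃ u : n → ℂ, u ≠ 0 ∧ M *ᵥ u = l • u := by
  rw [spectrum.mem_iff, Matrix.isUnit_iff_isUnit_det, isUnit_iff_ne_zero, not_not,
    ← Matrix.exists_mulVec_eq_zero_iff]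
  refine exists_congr fun u => and_congr_right fun _ => ?_
  rw [sub_mulVec, sub_eq_zero, Matrix.algebraMap_eq_diagonal, eq_comm]
  have : (diagonal (algebraMap ℂ (n → ℂ) l)) *ᵥ u = l • u := by
    ext v
    simp [mulVec_diagonal]
  rw [this]

lemma specRad_eq {n : Type*} [Fintype n] [DecidableEq n] [Nonempty n] (M : Matrix n n ℕ)
    (w : n → ℝ) (s : ℝ) (hw : ∀ v, 0 < w v) (hs : toR M *ᵥ w = s • w) : specRadN M = s := by
  have hs0 : 0 ≤ s := by
    obtain ⟨v⟩ := ‹Nonempty n›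
    have h := mulVec_nonneg (toR M) (toR_nonneg M) w (fun v => (hw v).le) v
    rw [hs] at h
    exact nonneg_of_mul_nonneg_left h (hw v)
  have h1 : spectralRadius ℂ (M.map (Nat.cast : ℕ → ℂ)) = ENNReal.ofReal s := by
    apply le_antisymm
    · refine iSup₂_le fun l hl => ?_
      obtain ⟨u, hu, hlu⟩ := (mem_spec _ _).mp hl
      have hb : ‖l‖ ≤ s := by
        refine le_of_super (toR M) (toR_nonneg M) w (fun v => ‖u v‖) hw s ‖l‖ hs
          (fun v => norm_nonneg _) (fun h => hu ?_) (fun v => ?_)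
        · ext v
          simpa using congrFun h v
        · rw [← norm_mul]
          have h2 := congrFun hlu v
          simp only [Pi.smul_apply, smul_eq_mul] at h2
          rw [← h2]
          refine (norm_sum_le _ _).trans (le_of_eq ?_)
          refine Finset.sum_congr rfl fun w _ => ?_
          simp [toR]
      rw [← enorm_eq_nnnorm, ← ofReal_norm]
      exact ENNReal.ofReal_le_ofReal hb
    · have hmem : (s : ℂ) ∈ spectrum ℂ (M.map (Nat.cast : ℕ → ℂ)) := by
        rw [mem_spec]
        refine ⟨fun v => (w v : ℂ), fun h => ?_, ?_⟩
        · obtain ⟨v⟩ := ‹Nonempty n›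
          have h2 := congrFun h v
          have := hw v
          simp at h2
          linarith
        · ext v
          have h2 := congrFun hs v
          simp only [mulVec, dotProduct, toR, map_apply, Pi.smul_apply, smul_eq_mul] at h2 ⊢
          exact_mod_cast h2
      refine le_trans (le_of_eq ?_) (le_iSup₂ (α := ENNReal) (s : ℂ) hmem)
      rw [← enorm_eq_nnnorm, ← ofReal_norm]
      simp [abs_of_nonneg hs0]
  rw [specRadN, h1, ENNReal.toReal_ofReal hs0]


lemma prod_map_mul_of_commute {ι R : Type*} [Monoid R] (f g : ι → R)
    (h : ∀ i j, Commute (f i) (g j)) (l : List ι) :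
    (l.map fun i => f i * g i).prod = (l.map f).prod * (l.map g).prod := by
  induction l with
  | nil => simp
  | cons a l ih =>
    simp only [List.map_cons, List.prod_cons, ih]
    have hc : Commute (g a) (l.map f).prod := by
      refine Commute.list_prod_right _ _ fun x hx => ?_
      obtain ⟨i, -, rfl⟩ := List.mem_map.mp hx
      exact (h i a).symm
    calc f a * g a * ((l.map f).prod * (l.map g).prod)
        = f a * (g a * (l.map f).prod) * (l.map g).prod := by simp only [mul_assoc]
      _ = f a * ((l.map f).prod * g a) * (l.map g).prod := by rw [hc.eq]
      _ = _ := by simp only [mul_assoc]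

lemma Apow_add {V : Type*} [Fintype V] [DecidableEq V] {k : ℕ} (A : Fin k → Matrix V V ℕ)
    (hcomm : ∀ i j, A i * A j = A j * A i) (m n : Fin k → ℕ) :
    Apow A (m + n) = Apow A m * Apow A n := by
  unfold Apow
  rw [← prod_map_mul_of_commute]
  · simp only [Pi.add_apply, pow_add]
  · intro i j
    exact Commute.pow_pow (hcomm i j) _ _

lemma prod_single {ι R : Type*} [DecidableEq ι] [Monoid R] (f : ι → R) (i : ι) (l : List ι) :
    (l.map fun j => f j ^ (Pi.single i 1 : ι → ℕ) j).prod = f i ^ l.count i := by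
  induction l with
  | nil => simp
  | cons a l ih =>
    simp only [List.map_cons, List.prod_cons, ih]
    by_cases h : a = i
    · subst h
      simp [pow_succ']
    · simp [h]

lemma Apow_single {V : Type*} [Fintype V] [DecidableEq V] {k : ℕ} (A : Fin k → Matrix V V ℕ)
    (i : Fin k) : Apow A (Pi.single i 1) = A i := by
  unfold Apow
  rw [prod_single, List.count_eq_one_of_mem (List.nodup_finRange k) (List.mem_finRange i), pow_one]

lemma Reaches.refl {V : Type*} [Fintype V] [DecidableEq V] {k : ℕ} (A : Fin k → Matrix V V ℕ)
    (v : V) : Reaches A v v := by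
  refine ⟨0, ?_⟩
  simp [Apow]

lemma Reaches.step {V : Type*} [Fintype V] [DecidableEq V] {k : ℕ} (A : Fin k → Matrix V V ℕ)
    (i : Fin k) (v w : V) (h : A i v w ≠ 0) : Reaches A v w :=
  ⟨Pi.single i 1, by rw [Apow_single]; exact Nat.pos_of_ne_zero h⟩

lemma Reaches.trans {V : Type*} [Fintype V] [DecidableEq V] {k : ℕ} (A : Fin k → Matrix V V ℕ)
    (hcomm : ∀ i j, A i * A j = A j * A i) {u v w : V} (h1 : Reaches A u v)
    (h2 : Reaches A v w) : Reaches A u w := by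
  obtain ⟨m, hm⟩ := h1
  obtain ⟨n, hn⟩ := h2
  refine ⟨m + n, ?_⟩
  rw [Apow_add A hcomm, mul_apply]
  exact Finset.sum_pos' (fun _ _ => Nat.zero_le _) ⟨v, Finset.mem_univ _, Nat.mul_pos hm hn⟩

lemma Reaches.pow {V : Type*} [Fintype V] [DecidableEq V] {k : ℕ} (A : Fin k → Matrix V V ℕ)
    (hcomm : ∀ i j, A i * A j = A j * A i) (i : Fin k) (m : ℕ) (v w : V)
    (h : (A i ^ m) v w ≠ 0) : Reaches A v w := by
  induction m generalizing v with
  | zero =>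
    rw [pow_zero, one_apply] at h
    have : v = w := by by_contra hne; simp [hne] at h
    exact this ▸ Reaches.refl A v
  | succ m ih =>
    rw [pow_succ', mul_apply] at h
    obtain ⟨u, -, hu⟩ := Finset.exists_ne_zero_of_sum_ne_zero h
    exact Reaches.trans A hcomm (Reaches.step A i v u (left_ne_zero_of_mul hu))
      (ih u (right_ne_zero_of_mul hu))

lemma IsSCC.mem {V : Type*} [Fintype V] [DecidableEq V] {k : ℕ} {A : Fin k → Matrix V V ℕ}
    (hcomm : ∀ i j, A i * A j = A j * A i) {C : Finset V} (hC : IsSCC A C) {u v w : V}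
    (hu : u ∈ C) (hw : w ∈ C) (h1 : Reaches A u v) (h2 : Reaches A v w) : v ∈ C := by
  obtain ⟨c, hc⟩ := hC
  rw [hc] at hu hw ⊢
  exact ⟨Reaches.trans A hcomm hu.1 h1, Reaches.trans A hcomm h2 hw.2⟩

lemma IsSCC.nonempty {V : Type*} [Fintype V] [DecidableEq V] {k : ℕ} {A : Fin k → Matrix V V ℕ}
    {C : Finset V} (hC : IsSCC A C) : Nonempty {x // x ∈ C} := by
  obtain ⟨c, hc⟩ := hC
  exact ⟨c, (hc c).2 ⟨Reaches.refl A c, Reaches.refl A c⟩⟩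

/-- Restriction of a matrix to a set of vertices, with real entries. -/
def sub {V : Type*} (M : Matrix V V ℕ) (C : Finset V) :
    Matrix {x // x ∈ C} {x // x ∈ C} ℝ :=
  toR (M.submatrix (fun c : {x // x ∈ C} => c.1) (fun c : {x // x ∈ C} => c.1))

lemma sub_nonneg' {V : Type*} (M : Matrix V V ℕ) (C : Finset V) (v w) : 0 ≤ sub M C v w :=
  toR_nonneg _ v w

lemma sub_irr {V : Type*} [Fintype V] [DecidableEq V] {k : ℕ} (A : Fin k → Matrix V V ℕ)
    (hcomm : ∀ i j, A i * A j = A j * A i) (C : Finset V) (hC : IsSCC A C)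
    (hirr : CoordIrreducible A C) (i : Fin k) (v w : {x // x ∈ C}) :
    ∃ m : ℕ, 0 < (sub (A i) C ^ m) v w := by
  obtain ⟨m, -, hm⟩ := hirr i v v.2 w w.2
  refine ⟨m, ?_⟩
  have hnn : ∀ k v w, 0 ≤ (sub (A i) C ^ k) v w := by
    intro k
    induction k with
    | zero => intro v w; rw [pow_zero, one_apply]; split_ifs <;> norm_num
    | succ k ih =>
      intro v w
      rw [pow_succ, mul_apply]
      exact Finset.sum_nonneg fun u _ => mul_nonneg (ih v u) (sub_nonneg' _ _ u w)
  induction m generalizing v with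
  | zero =>
    rw [pow_zero, one_apply] at hm ⊢
    have : v = w := by
      by_contra hne
      rw [if_neg (fun h => hne (Subtype.ext h))] at hm
      exact lt_irrefl _ hm
    simp [this]
  | succ m ih =>
    rw [pow_succ', mul_apply] at hm
    obtain ⟨u, -, hu⟩ := Finset.exists_ne_zero_of_sum_ne_zero hm.ne'
    have h1 := left_ne_zero_of_mul hu
    have h2 := right_ne_zero_of_mul hu
    have huC : u ∈ C := IsSCC.mem hcomm hC v.2 w.2 (Reaches.step A i _ _ h1)
      (Reaches.pow A hcomm i m _ _ h2)
    rw [pow_succ', mul_apply]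
    refine Finset.sum_pos' (fun x _ => mul_nonneg (sub_nonneg' _ _ _ _) (hnn _ _ _))
      ⟨⟨u, huC⟩, Finset.mem_univ _, mul_pos ?_ (ih ⟨u, huC⟩ (Nat.pos_of_ne_zero h2))⟩
    simp only [sub, toR, map_apply, submatrix_apply]
    exact_mod_cast Nat.pos_of_ne_zero h1

lemma sub_mulVec_le {V : Type*} [Fintype V] [DecidableEq V] (M : Matrix V V ℕ) (C : Finset V)
    (u : V → ℝ) (v : {x // x ∈ C}) :
    (sub M C *ᵥ fun c => u c) v = ∑ w ∈ C, toR M v w * u w := by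
  simp only [mulVec, dotProduct, sub, toR, map_apply, submatrix_apply]
  exact Finset.sum_coe_sort C (fun w => ((M v w : ℕ) : ℝ) * u w)

lemma sub_mulVec_eq {V : Type*} [Fintype V] [DecidableEq V] (M : Matrix V V ℕ) (C : Finset V)
    (u : V → ℝ) (v : {x // x ∈ C}) (h : ∀ w, w ∉ C → M v w ≠ 0 → u w = 0) :
    (sub M C *ᵥ fun c => u c) v = (toR M *ᵥ u) v := by
  rw [sub_mulVec_le]
  refine Finset.sum_subset (Finset.subset_univ _) fun w _ hw => ?_
  by_cases hz : M v w = 0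
  · simp [toR, hz]
  · rw [h w hw hz, mul_zero]

/-- Key lemma: `ρ`-superinvariant nonnegative vectors supported off `D` vanish. -/
lemma key {V : Type*} [Fintype V] [DecidableEq V] {k : ℕ} (A : Fin k → Matrix V V ℕ)
    (hcomm : ∀ i j, A i * A j = A j * A i)
    (hcomp : ∀ C : Finset V, IsSCC A C → CoordIrreducible A C) (D : Finset V) (j : Fin k) (ρ : ℝ)
    (hj : ∀ C : Finset V, IsSCC A C → C ≠ D → compRad A C j < ρ)
    (u : V → ℝ) (hu : ∀ v, 0 ≤ u v) (huD : ∀ v ∈ D, u v = 0)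
    (hsup : ∀ v, v ∉ D → ρ * u v ≤ (toR (A j) *ᵥ u) v) : u = 0 := by
  classical
  by_contra hne
  obtain ⟨v1, hv1⟩ := Function.ne_iff.mp hne
  let S : Finset V := Finset.univ.filter fun v => u v ≠ 0
  let R : V → Finset V := fun v => Finset.univ.filter fun w => Reaches A v w
  obtain ⟨v, hvS, hmin⟩ := S.exists_min_image (fun v => (R v).card) ⟨v1, by simpa [S] using hv1⟩
  have huv : u v ≠ 0 := by simpa [S] using hvS
  have hback : ∀ w, Reaches A v w → u w ≠ 0 → Reaches A w v := by
    intro w hw huw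
    have hsub : R w ⊆ R v := by
      intro x hx
      simp only [R, Finset.mem_filter, Finset.mem_univ, true_and] at hx ⊢
      exact Reaches.trans A hcomm hw hx
    have heq := Finset.eq_of_subset_of_card_le hsub (hmin w (by simpa [S] using huw))
    have : v ∈ R w := by
      rw [heq]
      simpa [R] using Reaches.refl A v
    simpa [R] using this
  let C : Finset V := Finset.univ.filter fun w => Reaches A v w ∧ Reaches A w v
  have hmemC : ∀ w, w ∈ C ↔ Reaches A v w ∧ Reaches A w v := fun w => by simp [C]
  have hC : IsSCC A C := ⟨v, hmemC⟩
  have hvC : v ∈ C := (hmemC v).2 ⟨Reaches.refl A v, Reaches.refl A v⟩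
  have hCD : C ≠ D := fun h => huv (huD v (h ▸ hvC))
  have := IsSCC.nonempty hC
  obtain ⟨s, x, hx, hs⟩ := perron (sub (A j) C) (sub_nonneg' _ _)
    (sub_irr A hcomm C hC (hcomp C hC) j)
  have hrad : compRad A C j = s := specRad_eq _ x s hx hs
  have hlt := hj C hC hCD
  have hle : ρ ≤ s := by
    refine le_of_super (sub (A j) C) (sub_nonneg' _ _) x (fun c => u c) hx s ρ hs
      (fun c => hu c) (fun h => huv (congrFun h ⟨v, hvC⟩)) (fun c => ?_)
    rw [sub_mulVec_eq]
    · by_cases hcD : c.1 ∈ D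
      · rw [huD _ hcD, mul_zero]
        exact mulVec_nonneg _ (toR_nonneg _) u hu _
      · exact hsup _ hcD
    · intro w hw hcw
      by_contra huw
      have hvw : Reaches A v w :=
        Reaches.trans A hcomm ((hmemC _).1 c.2).1 (Reaches.step A j _ _ hcw)
      exact hw ((hmemC w).2 ⟨hvw, hback w hvw huw⟩)
  linarith

lemma toR_comm {V : Type*} [Fintype V] (M N : Matrix V V ℕ) (h : M * N = N * M) :
    toR M * toR N = toR N * toR M := by
  have := congrArg (fun X : Matrix V V ℕ => X.map (Nat.castRingHom ℝ)) h
  simp only [Matrix.map_mul] at this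
  exact this

end Dom

/-- Theorem 4.2 of the paper: if the hereditary component `D` receives edges of every
colour from every component and dominates all other components in one colour `j`, then it
dominates in every colour. -/
theorem dominance_all_colours {V : Type*} [Fintype V] [DecidableEq V] [Nonempty V]
    {k : ℕ} (hk : 1 ≤ k)
    (A : Fin k → Matrix V V ℕ)
    (hcomm : ∀ i j, A i * A j = A j * A i)
    (hrow : ∀ i v, ∃ w, A i v w ≠ 0)
    (hcol : ∀ i v, ∃ w, A i w v ≠ 0)
    (hcomp : ∀ C : Finset V, IsSCC A C → NontrivialComp A C ∧ CoordIrreducible A C)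
    (D : Finset V) (hD : IsSCC A D) (hDher : Hereditary A D)
    (hconn : ∀ C : Finset V, IsSCC A C → ∀ i : Fin k, ∃ v ∈ C, ∃ w ∈ D, 0 < A i v w)
    (hj : ∃ j : Fin k, ∀ C : Finset V, IsSCC A C → C ≠ D →
      compRad A C j < compRad A D j) :
    ∀ C : Finset V, IsSCC A C → C ≠ D → ∀ i : Fin k,
      compRad A C i < compRad A D i := by
  have hirr : ∀ C : Finset V, IsSCC A C → CoordIrreducible A C := fun C hC => (hcomp C hC).2
  obtain ⟨j, hj⟩ := hj
  have := Dom.IsSCC.nonempty hD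
  have hDi := Dom.sub_irr A hcomm D hD (hirr D hD)
  obtain ⟨ρ, xD, hxD, hρ⟩ := Dom.perron (Dom.sub (A j) D) (Dom.sub_nonneg' _ _) (hDi j)
  have hrad : compRad A D j = ρ := Dom.specRad_eq _ xD ρ hxD hρ
  rw [hrad] at hj
  have hkey := Dom.key A hcomm hirr D j ρ hj
  have hher : ∀ (i : Fin k) (v : V), v ∈ D → ∀ w, w ∉ D → A i v w = 0 := by
    intro i v hv w hw
    by_contra h
    exact hw (hDher v hv w (Dom.Reaches.step A i v w h))
  have hDmul : ∀ (i : Fin k) (u : V → ℝ) (v : {x // x ∈ D}),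
      (Dom.sub (A i) D *ᵥ fun c => u c) v = (Dom.toR (A i) *ᵥ u) v := fun i u v =>
    Dom.sub_mulVec_eq _ _ _ _ fun w hw h => absurd (hher i v v.2 w hw) h
  -- real (signed) version of the key lemma
  have hkey' : ∀ u : V → ℝ, (∀ v ∈ D, u v = 0) →
      (∀ v, v ∉ D → ρ * u v = (Dom.toR (A j) *ᵥ u) v) → u = 0 := by
    intro u huD hu
    have hρ0 : 0 ≤ ρ := by
      rw [← hrad]
      exact ENNReal.toReal_nonneg
    have h := hkey (fun v => |u v|) (fun v => abs_nonneg _) (fun v hv => by simp [huD v hv])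
      (fun v hv => by
        rw [← abs_of_nonneg hρ0, ← abs_mul, hu v hv]
        refine (Finset.abs_sum_le_sum_abs _ _).trans (le_of_eq ?_)
        refine Finset.sum_congr rfl fun w _ => ?_
        rw [abs_mul, abs_of_nonneg (Dom.toR_nonneg (A j) v w)])
    ext v
    simpa using congrFun h v
  -- extend the eigenvector
  let T : (V → ℝ) →ₗ[ℝ] (V → ℝ) :=
    { toFun := fun u v => if v ∈ D then u v else ρ * u v - (Dom.toR (A j) *ᵥ u) v
      map_add' := by
        intro u w
        ext v
        simp only [mulVec_add, Pi.add_apply]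
        split_ifs <;> ring
      map_smul' := by
        intro c u
        ext v
        simp only [mulVec_smul, Pi.smul_apply, smul_eq_mul, RingHom.id_apply]
        split_ifs <;> ring }
  have hTapp : ∀ u v, T u v = if v ∈ D then u v else ρ * u v - (Dom.toR (A j) *ᵥ u) v :=
    fun _ _ => rfl
  have hTinj : Function.Injective T := by
    rw [← LinearMap.ker_eq_bot, LinearMap.ker_eq_bot']
    intro u hu
    refine hkey' u (fun v hv => ?_) (fun v hv => ?_)
    · have := congrFun hu v
      rwa [hTapp, if_pos hv] at this
    · have := congrFun hu v
      rw [hTapp, if_neg hv] at this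
      exact sub_eq_zero.mp this
  obtain ⟨x, hx⟩ := (LinearMap.injective_iff_surjective.mp hTinj)
    (fun v => if h : v ∈ D then xD ⟨v, h⟩ else 0)
  have hxDv : ∀ c : {x // x ∈ D}, x c = xD c := by
    intro c
    have := congrFun hx c
    rw [hTapp, if_pos c.2, dif_pos c.2] at this
    exact this
  have hxD' : (fun c : {x // x ∈ D} => x c) = xD := funext hxDv
  have hAx : Dom.toR (A j) *ᵥ x = ρ • x := by
    ext v
    by_cases hv : v ∈ D
    · have h := hDmul j x ⟨v, hv⟩
      rw [hxD', hρ] at h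
      rw [← h]
      simp [hxDv ⟨v, hv⟩]
    · have h := congrFun hx v
      rw [hTapp, if_neg hv, dif_neg hv] at h
      exact (sub_eq_zero.mp h).symm
  -- nonnegativity
  have hx0 : ∀ v, 0 ≤ x v := by
    have h := hkey (fun v => max (-x v) 0) (fun v => le_max_right _ _)
      (fun v hv => by
        have h1 := hxD ⟨v, hv⟩
        have h2 := hxDv ⟨v, hv⟩
        refine max_eq_right ?_
        simp only at h2
        linarith)
      (fun v hv => by
        have h1 := Dom.mulVec_mono (Dom.toR (A j)) (Dom.toR_nonneg _) (-x)
          (fun v => max (-x v) 0) (fun w => le_max_left _ _) v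
        rw [mulVec_neg, hAx] at h1
        simp only [Pi.neg_apply, Pi.smul_apply, smul_eq_mul] at h1
        rcases le_total (-x v) 0 with hle | hle
        · rw [max_eq_right hle, mul_zero]
          exact Dom.mulVec_nonneg _ (Dom.toR_nonneg _) _ (fun w => le_max_right _ _) v
        · rw [max_eq_left hle]
          linarith)
    intro v
    have h1 := congrFun h v
    have h2 := le_max_left (-x v) 0
    simp only [Pi.zero_apply] at h1
    linarith
  intro C hC hCD i
  -- common eigenvector
  set y := Dom.toR (A i) *ᵥ x with hy
  have hAy : Dom.toR (A j) *ᵥ y = ρ • y := by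
    rw [hy, mulVec_mulVec, Dom.toR_comm _ _ (hcomm j i), ← mulVec_mulVec, hAx, mulVec_smul]
  obtain ⟨r, hr⟩ := Dom.perron_unique (Dom.sub (A j) D) (Dom.sub_nonneg' _ _) (hDi j) ρ xD
    (fun c => y c) hxD hρ (by
      ext c
      rw [hDmul, hAy]
      rfl)
  have hyD : ∀ c : {x // x ∈ D}, y c = r * x c := fun c => by
    have := congrFun hr c
    rw [hxDv]
    simpa using this
  have hradi : compRad A D i = r := by
    refine Dom.specRad_eq _ xD r hxD ?_
    rw [← hr]
    ext c
    rw [← hxD']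
    exact hDmul i x c
  have hyx : y = r • x := by
    rw [← sub_eq_zero]
    refine hkey' _ (fun v hv => ?_) (fun v hv => ?_)
    · have := hyD ⟨v, hv⟩
      simp only at this
      simp [this]
    · rw [mulVec_sub, mulVec_smul, hAx, hAy]
      simp only [Pi.sub_apply, Pi.smul_apply, smul_eq_mul]
      ring
  rw [hradi]
  have := Dom.IsSCC.nonempty hC
  have hCi := Dom.sub_irr A hcomm C hC (hirr C hC) i
  obtain ⟨s, w, hw, hs⟩ := Dom.perron (Dom.sub (A i) C) (Dom.sub_nonneg' _ _) hCi
  have hradC : compRad A C i = s := Dom.specRad_eq _ w s hw hs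
  rw [hradC]
  have hyv : ∀ v, r * x v = ∑ w, Dom.toR (A i) v w * x w := fun v => (congrFun hyx v).symm
  have hterm : ∀ v w, 0 ≤ Dom.toR (A i) v w * x w := fun v w =>
    mul_nonneg (Dom.toR_nonneg _ _ _) (hx0 w)
  obtain ⟨v1, hv1, w1, hw1, hpos⟩ := hconn C hC i
  have hw1C : w1 ∉ C := by
    intro hmem
    apply hCD
    obtain ⟨c, hc⟩ := hC
    obtain ⟨d, hd⟩ := hD
    have h1 := (hc w1).1 hmem
    have h2 := (hd w1).1 hw1
    ext z
    rw [hc, hd]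
    have tr := @Dom.Reaches.trans V _ _ k A hcomm
    exact ⟨fun h => ⟨tr h2.1 (tr h1.2 h.1), tr h.2 (tr h1.1 h2.2)⟩,
      fun h => ⟨tr h1.1 (tr h2.2 h.1), tr h.2 (tr h2.1 h1.2)⟩⟩
  refine Dom.lt_of_sub (Dom.sub (A i) C) (Dom.sub_nonneg' _ _) hCi w (fun c => x c) s r hw hs
    (fun c => hx0 c) (fun c => ?_) ⟨v1, hv1⟩ ?_
  · rw [Dom.sub_mulVec_le, hyv]
    exact Finset.sum_le_sum_of_subset_of_nonneg (Finset.subset_univ _) fun w _ _ => hterm _ w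
  · rw [Dom.sub_mulVec_le, hyv]
    refine Finset.sum_lt_sum_of_subset (Finset.subset_univ _) (Finset.mem_univ w1) hw1C ?_
      fun w _ _ => hterm _ w
    refine mul_pos ?_ ?_
    · simp only [Dom.toR, map_apply]
      exact_mod_cast hpos
    · rw [hxDv ⟨w1, hw1⟩]
      exact hxD _
end

section
/- Let A_1,…,A_k (k ≥ 1) be pairwise commuting V×V matrices with nonnegative integer entries, each with no zero row and no zero column, such that every strongly connected component is nontrivial and coordinatewise irreducible. Suppose D is a strongly connected component which is hereditary as a subset of V, and suppose that for every strongly connected component C and every i ∈ {1,…,k} there exist m ∈ ℕ, v ∈ C and w ∈ D with (A_i^m)(v,w) > 0. If there exists j ∈ {1,…,k} such that ρ(A_{C,j}) < ρ(A_{D,j}) for every strongly connected component C ≠ D, then ρ(A_{C,i}) < ρ(A_{D,i}) for every strongly connected component C ≠ D and every i ∈ {1,…,k}. -/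
open Matrix

variable {V : Type*} [Fintype V] [DecidableEq V]

section H
attribute [local instance] Matrix.linftyOpNormedRing Matrix.linftyOpNormedAlgebra

theorem h_star {n : Type*} [Fintype n] [DecidableEq n] (N : Matrix n n ℕ) (u : n → ℝ)
    (hu : ∀ v, 0 ≤ u v) (v1 : n) (hv1 : 0 < u v1) (s : ℝ) (hs : 0 ≤ s)
    (h : ∀ v, s * u v ≤ ∑ w, (N v w : ℝ) * u w) : s ≤ specRadN N := by
  have : Nonempty n := ⟨v1⟩
  obtain ⟨v0, hv0⟩ := Finite.exists_max u
  have hv0p : 0 < u v0 := hv1.trans_le (hv0 v1)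
  have hpow : ∀ m : ℕ, ∀ v, s ^ m * u v ≤ ∑ w, ((N ^ m) v w : ℝ) * u w := by
    intro m
    induction m with
    | zero => intro v; simp [Matrix.one_apply]
    | succ m ih =>
      intro v
      calc s ^ (m+1) * u v = s ^ m * (s * u v) := by ring
        _ ≤ s ^ m * ∑ w, (N v w : ℝ) * u w := by gcongr; exact h v
        _ = ∑ w, (N v w : ℝ) * (s ^ m * u w) := by
            rw [Finset.mul_sum]; exact Finset.sum_congr rfl fun w _ => by ring
        _ ≤ ∑ w, (N v w : ℝ) * ∑ x, ((N ^ m) w x : ℝ) * u x := by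
            gcongr with w; exact ih w
        _ = ∑ x, ((N ^ (m+1)) v x : ℝ) * u x := by
            rw [pow_succ']
            simp only [Matrix.mul_apply, Nat.cast_sum, Nat.cast_mul, Finset.mul_sum,
              Finset.sum_mul]
            rw [Finset.sum_comm]
            exact Finset.sum_congr rfl fun x _ => Finset.sum_congr rfl fun w _ => by ring
  set B : Matrix n n ℂ := N.map (Nat.cast : ℕ → ℂ) with hB
  have hBp : ∀ m : ℕ, B ^ m = (N ^ m).map (Nat.cast : ℕ → ℂ) := by
    intro m
    exact (Matrix.map_pow N (Nat.castRingHom ℂ) m).symm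
  have hnorm : ∀ m : ℕ, s ^ m ≤ ‖B ^ m‖ := by
    intro m
    have h1 := Matrix.linfty_opNorm_mulVec (B ^ m) (fun w => (u w : ℂ))
    have h2 : ‖(fun w => (u w : ℂ))‖ ≤ u v0 := by
      rw [pi_norm_le_iff_of_nonneg hv0p.le]
      intro w
      simp [abs_of_nonneg (hu w), hv0 w]
    have h3 := norm_le_pi_norm ((B ^ m) *ᵥ (fun w => (u w : ℂ))) v0
    have h4 : ((B ^ m) *ᵥ (fun w => (u w : ℂ))) v0
        = ((∑ w, ((N ^ m) v0 w : ℝ) * u w : ℝ) : ℂ) := by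
      rw [hBp]; simp [Matrix.mulVec, dotProduct]
    have h6 : 0 ≤ ∑ w, ((N ^ m) v0 w : ℝ) * u w :=
      Finset.sum_nonneg fun w _ => mul_nonneg (Nat.cast_nonneg _) (hu w)
    rw [h4, Complex.norm_real, Real.norm_of_nonneg h6] at h3
    have h5 := (hpow m v0).trans (h3.trans (h1.trans
      (mul_le_mul_of_nonneg_left h2 (norm_nonneg _))))
    exact le_of_mul_le_mul_right h5 hv0p
  have : CompleteSpace (Matrix n n ℂ) := FiniteDimensional.complete ℂ _
  have hlim := spectrum.pow_nnnorm_pow_one_div_tendsto_nhds_spectralRadius B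
  have hfin : spectralRadius ℂ B ≠ ⊤ := 
    ((spectrum.spectralRadius_le_nnnorm (𝕜 := ℂ) B).trans_lt ENNReal.coe_lt_top).ne
  have hle : ENNReal.ofReal s ≤ spectralRadius ℂ B := by
    refine ge_of_tendsto hlim ?_
    filter_upwards [Filter.eventually_gt_atTop 0] with m hm
    have e : ENNReal.ofReal s = (ENNReal.ofReal (s ^ m)) ^ (1 / m : ℝ) := by
      rw [ENNReal.ofReal_pow hs, ← ENNReal.rpow_natCast, ← ENNReal.rpow_mul]
      have : (m : ℝ) ≠ 0 := by positivity
      rw [mul_one_div_cancel this, ENNReal.rpow_one]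
    rw [e]
    refine ENNReal.rpow_le_rpow ?_ (by positivity)
    rw [ENNReal.ofReal_le_iff_le_toReal (by simp)]
    simpa using hnorm m
  exact (ENNReal.ofReal_le_iff_le_toReal hfin).1 hle

theorem h_eig {n : Type*} [Fintype n] [DecidableEq n] [Nonempty n] (N : Matrix n n ℕ) :
    ∃ u : n → ℝ, (∀ v, 0 ≤ u v) ∧ (∃ v, 0 < u v) ∧
      ∀ v, specRadN N * u v ≤ ∑ w, (N v w : ℝ) * u w := by
  set B : Matrix n n ℂ := N.map (Nat.cast : ℕ → ℂ) with hB
  have : CompleteSpace (Matrix n n ℂ) := FiniteDimensional.complete ℂ _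
  obtain ⟨z, hz, hzr⟩ := spectrum.exists_nnnorm_eq_spectralRadius B
  have hr : specRadN N = ‖z‖ := by
    unfold specRadN
    rw [← hB, ← hzr]; simp
  rw [spectrum.mem_iff, Matrix.isUnit_iff_isUnit_det, isUnit_iff_ne_zero, not_not] at hz
  obtain ⟨x, hx0, hx⟩ := Matrix.exists_mulVec_eq_zero_iff.2 hz
  refine ⟨fun v => ‖x v‖, fun v => norm_nonneg _, ?_, ?_⟩
  · obtain ⟨v, hv⟩ := Function.ne_iff.1 hx0
    exact ⟨v, norm_pos_iff.2 hv⟩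
  · intro v
    have h1 : z * x v = ∑ w, (N v w : ℂ) * x w := by
      have := congrFun hx v
      rw [Matrix.sub_mulVec, Algebra.algebraMap_eq_smul_one, Matrix.smul_mulVec,
        Matrix.one_mulVec] at this
      simpa [Matrix.mulVec, dotProduct, sub_eq_zero, hB] using this
    rw [hr, ← norm_mul, h1]
    refine (norm_sum_le _ _).trans (le_of_eq ?_)
    simp
end H

theorem h_starC {V : Type*} [Fintype V] [DecidableEq V] (N : Matrix V V ℕ) (C : Finset V)
    (u : V → ℝ) (hu : ∀ v ∈ C, 0 ≤ u v) (v1 : V) (hv1 : v1 ∈ C) (h1 : 0 < u v1)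
    (s : ℝ) (hs : 0 ≤ s)
    (h : ∀ v ∈ C, s * u v ≤ ∑ w ∈ C, (N v w : ℝ) * u w) :
    s ≤ specRadN (N.submatrix (fun c : {x // x ∈ C} => c.1) (fun c : {x // x ∈ C} => c.1)) := by
  refine h_star _ (fun c => u c.1) (fun c => hu c.1 c.2) ⟨v1, hv1⟩ h1 s hs ?_
  intro v
  refine (h v.1 v.2).trans (le_of_eq ?_)
  rw [← Finset.sum_coe_sort C]
  rfl

theorem h_eigC {V : Type*} [Fintype V] [DecidableEq V] (N : Matrix V V ℕ) (C : Finset V)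
    (hC : C.Nonempty) : ∃ u : V → ℝ, (∀ v, 0 ≤ u v) ∧ (∀ v, v ∉ C → u v = 0) ∧
      (∃ v ∈ C, 0 < u v) ∧ ∀ v ∈ C, specRadN (N.submatrix (fun c : {x // x ∈ C} => c.1)
        (fun c : {x // x ∈ C} => c.1)) * u v ≤ ∑ w ∈ C, (N v w : ℝ) * u w := by
  have : Nonempty {x // x ∈ C} := ⟨⟨hC.choose, hC.choose_spec⟩⟩
  obtain ⟨u, hu, ⟨v1, h1⟩, h⟩ := h_eig (N.submatrix (fun c : {x // x ∈ C} => c.1)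
        (fun c : {x // x ∈ C} => c.1))
  refine ⟨fun v => if hv : v ∈ C then u ⟨v, hv⟩ else 0, ?_, ?_, ⟨v1, v1.2, ?_⟩, ?_⟩
  · intro v; dsimp only; split_ifs; exacts [hu _, le_rfl]
  · intro v hv; simp [hv]
  · simpa using h1
  · intro v hv
    rw [← Finset.sum_coe_sort C]
    have := h ⟨v, hv⟩
    simpa [hv] using this

section R
variable {W : Type*} [Fintype W] [DecidableEq W] {k : ℕ} (A : Fin k → Matrix W W ℕ)

theorem h_list (hcomm : ∀ i j, A i * A j = A j * A i) (n m : Fin k → ℕ) (l : List (Fin k)) :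
    (l.map fun i => (A i) ^ ((n + m) i)).prod =
      (l.map fun i => (A i) ^ (n i)).prod * (l.map fun i => (A i) ^ (m i)).prod := by
  induction l with
  | nil => simp
  | cons a l ih =>
    have hc : Commute (A a ^ m a) (l.map fun i => (A i) ^ (n i)).prod := by
      apply Commute.list_prod_right
      intro x hx
      obtain ⟨i, -, rfl⟩ := List.mem_map.1 hx
      exact Commute.pow_pow (hcomm a i) _ _
    simp only [List.map_cons, List.prod_cons, ih]
    rw [Pi.add_apply, pow_add, mul_assoc, mul_assoc, ← mul_assoc (A a ^ m a), hc.eq, mul_assoc]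

theorem h_single (i : Fin k) (m : ℕ) : Apow A (Pi.single i m) = A i ^ m := by
  have key : ∀ l : List (Fin k), l.Nodup →
      (l.map fun t => (A t) ^ ((Pi.single i m : Fin k → ℕ) t)).prod
        = if i ∈ l then A i ^ m else 1 := by
    intro l
    induction l with
    | nil => simp
    | cons a l ih =>
      intro hl
      rw [List.nodup_cons] at hl
      rw [List.map_cons, List.prod_cons, ih hl.2]
      by_cases ha : a = i
      · subst ha; simp [hl.1]
      · have : i ≠ a := fun h => ha h.symm
        simp [this, ha]
  unfold Apow
  rw [key _ (List.nodup_finRange k)]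
  simp

theorem h_mulpos {M N : Matrix W W ℕ} {a b c : W} (h1 : 0 < M a b) (h2 : 0 < N b c) :
    0 < (M * N) a c := by
  rw [Matrix.mul_apply]
  exact Finset.sum_pos' (fun _ _ => Nat.zero_le _) ⟨b, Finset.mem_univ _, Nat.mul_pos h1 h2⟩

theorem h_trans (hcomm : ∀ i j, A i * A j = A j * A i) {a b c : W}
    (h1 : Reaches A a b) (h2 : Reaches A b c) : Reaches A a c := by
  obtain ⟨n, hn⟩ := h1
  obtain ⟨m, hm⟩ := h2
  refine ⟨n + m, ?_⟩
  have : Apow A (n + m) = Apow A n * Apow A m := h_list A hcomm n m _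
  rw [this]
  exact h_mulpos hn hm

theorem h_pow {a b : W} {i : Fin k} {m : ℕ} (h : 0 < (A i ^ m) a b) : Reaches A a b :=
  ⟨Pi.single i m, by rwa [h_single]⟩

theorem h_edge {a b : W} {i : Fin k} (h : 0 < A i a b) : Reaches A a b :=
  h_pow A (i := i) (m := 1) (by rwa [pow_one])

theorem h_refl [h : Nonempty (Fin k)] (a : W) : Reaches A a a :=
  h_pow A (i := h.some) (m := 0) (by simp)

/-- a set closed under edges is closed under paths -/
theorem h_closed (N : Matrix W W ℕ) (S : Set W) (hS : ∀ a ∈ S, ∀ b, 0 < N a b → b ∈ S) (m : ℕ) :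
    ∀ a ∈ S, ∀ b, 0 < (N ^ m) a b → b ∈ S := by
  induction m with
  | zero =>
    intro a ha b hb
    by_cases h : a = b
    · rwa [← h]
    · simp [h] at hb
  | succ m ih =>
    intro a ha b hb
    rw [pow_succ', Matrix.mul_apply] at hb
    obtain ⟨c, -, hc⟩ := Finset.exists_ne_zero_of_sum_ne_zero hb.ne'
    rw [mul_ne_zero_iff] at hc
    exact ih c (hS a ha c (Nat.pos_of_ne_zero hc.1)) b (Nat.pos_of_ne_zero hc.2)

/-- real action -/
def ract (N : Matrix W W ℕ) : (W → ℝ) →ₗ[ℝ] (W → ℝ) := (N.map (Nat.cast : ℕ → ℝ)).mulVecLin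

theorem ract_apply (N : Matrix W W ℕ) (u : W → ℝ) (v : W) :
    ract N u v = ∑ w, (N v w : ℝ) * u w := by
  simp [ract, Matrix.mulVec, dotProduct]

theorem ract_mul (N M : Matrix W W ℕ) (u : W → ℝ) : ract (N * M) u = ract N (ract M u) := by
  have : (N * M).map (Nat.cast : ℕ → ℝ) = N.map Nat.cast * M.map Nat.cast :=
    Matrix.map_mul (f := Nat.castRingHom ℝ)
  simp [ract, this]

theorem ract_one (u : W → ℝ) : ract (1 : Matrix W W ℕ) u = u := by
  ext v; simp [ract_apply, Matrix.one_apply]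

end R

section P
variable {W : Type*} [Fintype W] [DecidableEq W]

theorem ract_sum (N : Matrix W W ℕ) (D : Finset W) (u : W → ℝ) (v : W)
    (h : ∀ w, 0 < N v w → w ∉ D → u w = 0) :
    ract N u v = ∑ w ∈ D, (N v w : ℝ) * u w := by
  rw [ract_apply]
  symm
  apply Finset.sum_subset (Finset.subset_univ _)
  intro w _ hw
  rcases Nat.eq_zero_or_pos (N v w) with h0 | h0
  · simp [h0]
  · simp [h w h0 hw]

theorem ract_nonneg (N : Matrix W W ℕ) (u : W → ℝ) (v : W)
    (h : ∀ w, 0 < N v w → 0 ≤ u w) : 0 ≤ ract N u v := by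
  rw [ract_apply]
  refine Finset.sum_nonneg fun w _ => ?_
  rcases Nat.eq_zero_or_pos (N v w) with h0 | h0
  · simp [h0]
  · exact mul_nonneg (Nat.cast_nonneg _) (h w h0)

theorem ract_pos (N : Matrix W W ℕ) (u : W → ℝ) (v b : W)
    (h : ∀ w, 0 < N v w → 0 ≤ u w) (hb : 0 < N v b) (hub : 0 < u b) : 0 < ract N u v := by
  rw [ract_apply]
  refine Finset.sum_pos' (fun w _ => ?_) ⟨b, Finset.mem_univ _, ?_⟩
  · rcases Nat.eq_zero_or_pos (N v w) with h0 | h0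
    · simp [h0]
    · exact mul_nonneg (Nat.cast_nonneg _) (h w h0)
  · exact mul_pos (Nat.cast_pos.2 hb) hub

theorem h_pos (N : Matrix W W ℕ) (D : Set W) (hD : ∀ v ∈ D, ∀ w, 0 < N v w → w ∈ D)
    (z : W → ℝ) (hz : ∀ v ∈ D, 0 ≤ z v) (l : ℝ) (he : ∀ v ∈ D, ract N z v = l * z v)
    (m : ℕ) (v w : W) (hv : v ∈ D) (h : 0 < (N ^ m) v w) (hw : 0 < z w) : 0 < z v := by
  rcases (hz v hv).lt_or_eq with h1 | h1
  · exact h1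
  exfalso
  have := h_closed N {a | a ∈ D ∧ z a = 0} (by
    rintro a ⟨ha, ha0⟩ b hb
    have hbD := hD a ha b hb
    refine ⟨hbD, ?_⟩
    by_contra hne
    have := ract_pos N z a b (fun w hw => hz w (hD a ha w hw)) hb
      (lt_of_le_of_ne (hz b hbD) (Ne.symm hne))
    rw [he a ha, ha0] at this
    simp at this) m v ⟨hv, h1.symm⟩ w h
  exact hw.ne' this.2

theorem h_pf (N : Matrix W W ℕ) (D : Finset W) (hne : D.Nonempty)
    (hD : ∀ v ∈ D, ∀ w, 0 < N v w → w ∈ D)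
    (hirr : ∀ v ∈ D, ∀ w ∈ D, ∃ m : ℕ, 0 < (N ^ m) v w) :
    ∃ x : W → ℝ, (∀ v ∈ D, 0 < x v) ∧ ∀ v ∈ D, ract N x v =
      specRadN (N.submatrix (fun c : {x // x ∈ D} => c.1) (fun c : {x // x ∈ D} => c.1)) * x v := by
  set r := specRadN (N.submatrix (fun c : {x // x ∈ D} => c.1)
    (fun c : {x // x ∈ D} => c.1)) with hr
  have hr0 : 0 ≤ r := ENNReal.toReal_nonneg
  obtain ⟨u, hu, hu0, ⟨v1, hv1, h1⟩, h⟩ := h_eigC N D hne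
  rw [← hr] at h
  have hsum : ∀ f : W → ℝ, ∀ v ∈ D, ract N f v = ∑ w ∈ D, (N v w : ℝ) * f w := fun f v hv =>
    ract_sum N D f v fun w hw hwD => absurd (hD v hv w hw) hwD
  have hDp : ∀ m : ℕ, ∀ v ∈ D, ∀ w, 0 < (N ^ m) v w → w ∈ D := fun m v hv w hw =>
    h_closed N {a | a ∈ D} hD m v hv w hw
  have heq : ∀ v ∈ D, ract N u v = r * u v := by
    by_contra hcon
    push Not at hcon
    obtain ⟨v0, hv0, hne0⟩ := hcon
    set p : W → ℝ := ract N u - r • u with hp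
    have hp0 : ∀ v ∈ D, 0 ≤ p v := by
      intro v hv
      have := h v hv
      rw [← hsum u v hv] at this
      simp [hp, this]
    have hpv0 : 0 < p v0 := by
      refine lt_of_le_of_ne (hp0 v0 hv0) fun h' => hne0 ?_
      simp [hp] at h'
      linarith
    have hm : ∀ v : W, ∃ m : ℕ, v ∈ D → 0 < (N ^ m) v v0 := by
      intro v
      by_cases hv : v ∈ D
      · obtain ⟨m, hm⟩ := hirr v hv v0 hv0
        exact ⟨m, fun _ => hm⟩
      · exact ⟨0, fun h => absurd h hv⟩
    choose m hm using hm
    set q : W → ℝ := u + ∑ d ∈ D, ract (N ^ (m d)) u with hq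
    have hq1 : ract N q - r • q = p + ∑ d ∈ D, ract (N ^ (m d)) p := by
      rw [hq, hp, map_add, map_sum, smul_add, Finset.smul_sum]
      have : ∀ d, ract (N ^ m d) (ract N u - r • u)
          = ract N (ract (N ^ m d) u) - r • ract (N ^ m d) u := by
        intro d
        rw [map_sub, map_smul, ← ract_mul, ← ract_mul, ← pow_succ, ← pow_succ']
      simp only [this, Finset.sum_sub_distrib]
      abel
    have hqu : ∀ v, u v ≤ q v := by
      intro v
      simp only [hq, Pi.add_apply, Finset.sum_apply, le_add_iff_nonneg_right]
      exact Finset.sum_nonneg fun d _ => ract_nonneg _ _ _ fun w _ => hu w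
    have hdiff : ∀ v ∈ D, 0 < ract N q v - r * q v := by
      intro v hv
      have e := congrFun hq1 v
      simp only [Pi.sub_apply, Pi.smul_apply, smul_eq_mul, Pi.add_apply, Finset.sum_apply] at e
      rw [e]
      refine add_pos_of_nonneg_of_pos (hp0 v hv) ?_
      refine Finset.sum_pos' (fun d _ => ?_) ⟨v, hv, ?_⟩
      · exact ract_nonneg _ _ _ fun w hw => hp0 w (hDp _ v hv w hw)
      · exact ract_pos _ _ _ v0 (fun w hw => hp0 w (hDp _ v hv w hw)) (hm v hv) hpv0
    obtain ⟨d, hd, hmin⟩ := Finset.exists_min_image D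
      (fun v => (ract N q v - r * q v) / (q v + 1)) hne
    have hqn : ∀ v, 0 ≤ q v := fun v => (hu v).trans (hqu v)
    set e := (ract N q d - r * q d) / (q d + 1) with he
    have he0 : 0 < e := div_pos (hdiff d hd) (by linarith [hqn d])
    have := h_starC N D q (fun v _ => hqn v) v1 hv1 (h1.trans_le (hqu v1)) (r + e)
      (by linarith) (by
        intro v hv
        rw [← hsum q v hv]
        have := hmin v hv
        rw [le_div_iff₀ (by linarith [hqn v])] at this
        nlinarith [hqn v])
    rw [← hr] at this
    linarith
  refine ⟨u, fun v hv => ?_, heq⟩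
  obtain ⟨m, hm⟩ := hirr v hv v1 hv1
  exact h_pos N (D : Set W) hD u (fun v _ => hu v) r heq m v v1 hv hm h1

theorem h_L {k : ℕ} [Nonempty (Fin k)] (A : Fin k → Matrix W W ℕ)
    (hcomm : ∀ i j, A i * A j = A j * A i) (D : Finset W) (j : Fin k) (l : ℝ) (hl : 0 ≤ l)
    (hj : ∀ C : Finset W, IsSCC A C → C ≠ D → compRad A C j < l)
    (u : W → ℝ) (hu : ∀ v, 0 ≤ u v) (hD : ∀ v ∈ D, u v = 0)
    (h : ∀ v, l * u v ≤ ract (A j) u v) : ∀ v, u v = 0 := by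
  classical
  by_contra hcon
  push Not at hcon
  obtain ⟨v', hv'⟩ := hcon
  obtain ⟨v, hv, hmin⟩ := Finset.exists_min_image (Finset.univ.filter fun v => u v ≠ 0)
    (fun v => (Finset.univ.filter fun w => Reaches A v w).card) ⟨v', by simpa using hv'⟩
  simp only [Finset.mem_filter, Finset.mem_univ, true_and] at hv hmin
  set C : Finset W := Finset.univ.filter fun w => Reaches A v w ∧ Reaches A w v with hC
  have hCS : IsSCC A C := ⟨v, fun w => by simp [hC]⟩
  have hvC : v ∈ C := by simp [hC, h_refl A v]
  have hCD : C ≠ D := fun e => hv (hD v (e ▸ hvC))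
  have := hj C hCS hCD
  refine absurd this (not_lt.2 ?_)
  refine h_starC (A j) C u (fun v _ => hu v) v hvC (lt_of_le_of_ne (hu v) hv.symm) l hl ?_
  intro a ha
  refine (h a).trans (le_of_eq (ract_sum _ C u a ?_))
  intro w hw hwC
  by_contra hne
  have haw := h_edge A hw
  simp only [hC, Finset.mem_filter, Finset.mem_univ, true_and] at ha hwC
  have hvw := h_trans A hcomm ha.1 haw
  refine absurd (hmin w hne) (not_le.2 (Finset.card_lt_card ?_))
  rw [Finset.ssubset_iff_of_subset]
  · exact ⟨v, by simp [h_refl A v], by simpa using fun hwv => hwC ⟨hvw, hwv⟩⟩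
  · intro b hb
    simp only [Finset.mem_filter, Finset.mem_univ, true_and] at hb ⊢
    exact h_trans A hcomm hvw hb

theorem ract_abs (N : Matrix W W ℕ) (z : W → ℝ) (v : W) :
    |ract N z v| ≤ ract N (fun w => |z w|) v := by
  rw [ract_apply, ract_apply]
  refine (Finset.abs_sum_le_sum_abs _ _).trans (le_of_eq ?_)
  simp [abs_mul]

theorem h_Lz {k : ℕ} [Nonempty (Fin k)] (A : Fin k → Matrix W W ℕ)
    (hcomm : ∀ i j, A i * A j = A j * A i) (D : Finset W) (j : Fin k) (l : ℝ) (hl : 0 ≤ l)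
    (hj : ∀ C : Finset W, IsSCC A C → C ≠ D → compRad A C j < l)
    (z : W → ℝ) (hD : ∀ v ∈ D, z v = 0)
    (h : ∀ v, v ∉ D → l * z v = ract (A j) z v) : ∀ v, z v = 0 := by
  have := h_L A hcomm D j l hl hj (fun v => |z v|) (fun v => abs_nonneg _)
    (fun v hv => by simp [hD v hv]) (fun v => by
      by_cases hv : v ∈ D
      · simp only [hD v hv, abs_zero, mul_zero]
        exact ract_nonneg _ _ _ fun w _ => abs_nonneg _
      · have := ract_abs (A j) z v
        rwa [← h v hv, abs_mul, abs_of_nonneg hl] at this)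
  intro v
  simpa using this v

theorem h_ext {k : ℕ} [Nonempty (Fin k)] (A : Fin k → Matrix W W ℕ)
    (hcomm : ∀ i j, A i * A j = A j * A i) (D : Finset W) (j : Fin k) (l : ℝ) (hl : 0 ≤ l)
    (hj : ∀ C : Finset W, IsSCC A C → C ≠ D → compRad A C j < l)
    (x : W → ℝ) : ∃ y : W → ℝ, (∀ v ∈ D, y v = x v) ∧
      ∀ v, v ∉ D → ract (A j) y v = l * y v := by
  let T : (W → ℝ) →ₗ[ℝ] (W → ℝ) :=
    { toFun := fun z v => if v ∈ D then z v else l * z v - ract (A j) z v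
      map_add' := by
        intro a b; ext v
        by_cases hv : v ∈ D
        · simp [hv]
        · simp [hv]; ring
      map_smul' := by
        intro a b; ext v
        by_cases hv : v ∈ D
        · simp [hv]
        · simp [hv]; ring }
  have hT : ∀ z v, T z v = if v ∈ D then z v else l * z v - ract (A j) z v := fun _ _ => rfl
  have hinj : Function.Injective T := by
    rw [← LinearMap.ker_eq_bot, LinearMap.ker_eq_bot']
    intro z hz
    ext v
    refine h_Lz A hcomm D j l hl hj z ?_ ?_ v
    · intro v hv
      have := congrFun hz v
      simpa [hT, hv] using this
    · intro v hv
      have := congrFun hz v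
      simpa [hT, hv, sub_eq_zero] using this
  obtain ⟨y, hy⟩ := LinearMap.injective_iff_surjective.1 hinj (fun v => if v ∈ D then x v else 0)
  refine ⟨y, fun v hv => ?_, fun v hv => ?_⟩
  · have := congrFun hy v
    simpa [hT, hv] using this
  · have := congrFun hy v
    simp [hT, hv] at this
    linarith
end P

/-- Corollary 4.3 of the paper: as in Theorem 4.2, but allowing singly-coloured bridges of
any length: every component is connected to the hereditary component `D` by a power of each
single vertex matrix. -/
theorem dominance_all_colours_powers {V : Type*} [Fintype V] [DecidableEq V] [Nonempty V]
    {k : ℕ} (hk : 1 ≤ k)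
    (A : Fin k → Matrix V V ℕ)
    (hcomm : ∀ i j, A i * A j = A j * A i)
    (hrow : ∀ i v, ∃ w, A i v w ≠ 0)
    (hcol : ∀ i v, ∃ w, A i w v ≠ 0)
    (hcomp : ∀ C : Finset V, IsSCC A C → NontrivialComp A C ∧ CoordIrreducible A C)
    (D : Finset V) (hD : IsSCC A D) (hDher : Hereditary A D)
    (hconn : ∀ C : Finset V, IsSCC A C → ∀ i : Fin k,
      ∃ m : ℕ, ∃ v ∈ C, ∃ w ∈ D, 0 < ((A i) ^ m) v w)
    (hj : ∃ j : Fin k, ∀ C : Finset V, IsSCC A C → C ≠ D →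
      compRad A C j < compRad A D j) :
    ∀ C : Finset V, IsSCC A C → C ≠ D → ∀ i : Fin k,
      compRad A C i < compRad A D i := by
  classical
  have : Nonempty (Fin k) := ⟨⟨0, hk⟩⟩
  obtain ⟨j, hj⟩ := hj
  intro C hC hCD i
  set l := compRad A D j with hl
  have hl0 : 0 ≤ l := ENNReal.toReal_nonneg
  have hDne : D.Nonempty := by
    obtain ⟨v, hv⟩ := hD
    exact ⟨v, (hv v).2 ⟨h_refl A v, h_refl A v⟩⟩
  have hDe : ∀ t : Fin k, ∀ v ∈ D, ∀ w, 0 < A t v w → w ∈ D := fun t v hv w hw =>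
    hDher v hv w (h_edge A hw)
  have hirr : ∀ E : Finset V, IsSCC A E → ∀ t : Fin k, ∀ v ∈ E, ∀ w ∈ E,
      ∃ m : ℕ, 0 < (A t ^ m) v w := by
    intro E hE t v hv w hw
    obtain ⟨m, -, hm⟩ := (hcomp E hE).2 t v hv w hw
    exact ⟨m, hm⟩
  obtain ⟨x, hx, hxe⟩ := h_pf (A j) D hDne (hDe j) (hirr D hD j)
  obtain ⟨y, hyx, hye⟩ := h_ext A hcomm D j l hl0 hj x
  have hyE : ∀ v, ract (A j) y v = l * y v := by
    intro v
    by_cases hv : v ∈ D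
    · have e : ract (A j) y v = ract (A j) x v := by
        rw [ract_sum (A j) D y v fun w hw hwD => absurd (hDe j v hv w hw) hwD,
          ract_sum (A j) D x v fun w hw hwD => absurd (hDe j v hv w hw) hwD]
        exact Finset.sum_congr rfl fun w hw => by rw [hyx w hw]
      rw [e, hyx v hv]
      exact hxe v hv
    · exact hye v hv
  have hyD : ∀ v ∈ D, 0 < y v := fun v hv => by rw [hyx v hv]; exact hx v hv
  have hy0 : ∀ v, 0 ≤ y v := by
    have := h_L A hcomm D j l hl0 hj (fun v => max (- y v) 0) (fun v => le_max_right _ _)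
      (fun v hv => by simp [(hyD v hv).le]) (fun v => by
        rcases le_total 0 (y v) with h | h
        · simp only [neg_nonpos.2 h, max_eq_right, mul_zero]
          exact ract_nonneg _ _ _ fun w _ => le_max_right _ _
        · rw [max_eq_left (neg_nonneg.2 h)]
          have e := hyE v
          have : - ract (A j) y v ≤ ract (A j) (fun v => max (- y v) 0) v := by
            rw [ract_apply, ract_apply, ← Finset.sum_neg_distrib]
            refine Finset.sum_le_sum fun w _ => ?_
            rw [← mul_neg]
            exact mul_le_mul_of_nonneg_left (le_max_left _ _) (Nat.cast_nonneg _)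
          linarith)
    intro v
    have := this v
    simpa using this
  have hreach : ∀ v, ∀ t : Fin k, ∃ m : ℕ, ∃ w ∈ D, 0 < (A t ^ m) v w := by
    intro v t
    have hE : IsSCC A (Finset.univ.filter fun w => Reaches A v w ∧ Reaches A w v) :=
      ⟨v, fun w => by simp⟩
    obtain ⟨m, a, ha, w, hw, hm⟩ := hconn _ hE t
    obtain ⟨m', hm'⟩ := hirr _ hE t v (by simp [h_refl A v]) a ha
    exact ⟨m' + m, w, hw, by rw [pow_add]; exact h_mulpos hm' hm⟩
  have hy : ∀ v, 0 < y v := by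
    intro v
    obtain ⟨m, w, hw, hm⟩ := hreach v j
    exact h_pos (A j) Set.univ (fun _ _ _ _ => Set.mem_univ _) y (fun v _ => hy0 v) l
      (fun v _ => hyE v) m v w (Set.mem_univ _) hm (hyD w hw)
  -- `y` is an eigenvector of `A i`
  obtain ⟨d, hd, hmin⟩ := Finset.exists_min_image D (fun v => ract (A i) y v / y v) hDne
  set c := ract (A i) y d / y d with hc
  have hc0 : 0 ≤ c := div_nonneg (ract_nonneg _ _ _ fun w _ => hy0 w) (hy0 d)
  set z : V → ℝ := ract (A i) y - c • y with hz
  have hyfun : ract (A j) y = l • y := by ext v; simp [hyE v]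
  have hzE : ract (A j) z = l • z := by
    rw [hz, map_sub, map_smul, ← ract_mul, hcomm j i, ract_mul, hyfun, map_smul, smul_sub,
      smul_comm c l]
  have hzD0 : ∀ v ∈ D, 0 ≤ z v := by
    intro v hv
    have := hmin v hv
    rw [le_div_iff₀ (hy v)] at this
    simpa [hz] using this
  have hzd : z d = 0 := by
    simp [hz, hc, div_mul_cancel₀ _ (hy d).ne']
  have hzD : ∀ v ∈ D, z v = 0 := by
    intro v hv
    by_contra hne
    obtain ⟨m, hm⟩ := hirr D hD j d hd v hv
    have := h_pos (A j) (D : Set V) (hDe j) z hzD0 l (fun v _ => by simp [hzE]) m d v hd hm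
      (lt_of_le_of_ne (hzD0 v hv) (Ne.symm hne))
    exact this.ne' hzd
  have hz0 := h_Lz A hcomm D j l hl0 hj z hzD (fun v _ => by simp [hzE])
  have hyi : ∀ v, ract (A i) y v = c * y v := by
    intro v
    have := hz0 v
    simp [hz] at this
    linarith
  have hcD : c ≤ compRad A D i := by
    refine h_starC (A i) D y (fun v _ => hy0 v) d hd (hy d) c hc0 fun v hv => ?_
    rw [← ract_sum (A i) D y v fun w hw hwD => absurd (hDe i v hv w hw) hwD, hyi]
  refine lt_of_lt_of_le ?_ hcD
  -- strictness
  by_contra hcon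
  push Not at hcon
  have hCne : C.Nonempty := by
    obtain ⟨v, hv⟩ := hC
    exact ⟨v, (hv v).2 ⟨h_refl A v, h_refl A v⟩⟩
  obtain ⟨u, hu, huC, ⟨v1, hv1, h1⟩, hue⟩ := h_eigC (A i) C hCne
  have hue' : ∀ v ∈ C, c * u v ≤ ∑ w ∈ C, (A i v w : ℝ) * u w := fun v hv =>
    (mul_le_mul_of_nonneg_right hcon (hu v)).trans (hue v hv)
  obtain ⟨b, hb, hmax⟩ := Finset.exists_max_image C (fun v => u v / y v) hCne
  set t := u b / y b with ht
  have ht0 : 0 < t := lt_of_lt_of_le (div_pos h1 (hy v1)) (hmax v1 hv1)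
  have hut : ∀ v ∈ C, u v ≤ t * y v := by
    intro v hv
    have := hmax v hv
    rwa [div_le_iff₀ (hy v)] at this
  have hub : u b = t * y b := by rw [ht, div_mul_cancel₀ _ (hy b).ne']
  -- at every vertex of `C` where `u = t y`, edges lead only to such vertices
  have hstep : ∀ a ∈ C, u a = t * y a → ∀ e, 0 < A i a e → e ∈ C ∧ u e = t * y e := by
    intro a ha hua e he
    have h2 : ∑ w, (A i a w : ℝ) * (t * y w - u w) ≤ 0 := by
      have h3 := hue' a ha
      rw [← ract_sum (A i) C u a fun w _ hw => huC w hw] at h3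
      have h4 := hyi a
      rw [ract_apply] at h3 h4
      simp only [mul_sub, Finset.sum_sub_distrib]
      have h5 : ∑ w, (A i a w : ℝ) * (t * y w) = t * (c * y a) := by
        rw [← h4, Finset.mul_sum]
        exact Finset.sum_congr rfl fun w _ => by ring
      rw [h5]
      rw [hua] at h3
      linarith
    have h6 : ∀ w, 0 ≤ t * y w - u w := by
      intro w
      by_cases hw : w ∈ C
      · linarith [hut w hw]
      · rw [huC w hw]; simpa using (mul_pos ht0 (hy w)).le
    have h7 : ∀ w ∈ Finset.univ, 0 ≤ (A i a w : ℝ) * (t * y w - u w) := fun w _ =>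
      mul_nonneg (Nat.cast_nonneg _) (h6 w)
    have h8 := (Finset.sum_eq_zero_iff_of_nonneg h7).1 (le_antisymm h2 (Finset.sum_nonneg h7))
      e (Finset.mem_univ _)
    have h9 : (A i a e : ℝ) ≠ 0 := Nat.cast_ne_zero.2 he.ne'
    have h10 : t * y e - u e = 0 := (mul_eq_zero.1 h8).resolve_left h9
    refine ⟨?_, by linarith⟩
    by_contra heC
    rw [huC e heC] at h10
    have := mul_pos ht0 (hy e)
    linarith
  obtain ⟨m, w, hw, hm⟩ := hreach b i
  have hwC := (h_closed (A i) {a | a ∈ C ∧ u a = t * y a}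
    (fun a ha e he => hstep a ha.1 ha.2 e he) m b ⟨hb, hub⟩ w hm).1
  -- `C` and `D` share a vertex, so they coincide
  apply hCD
  obtain ⟨p, hp⟩ := hC
  obtain ⟨q, hq⟩ := hD
  have hpw := (hp w).1 hwC
  have hqw := (hq w).1 hw
  ext a
  rw [hp, hq]
  constructor
  · rintro ⟨h2, h3⟩
    exact ⟨h_trans A hcomm hqw.1 (h_trans A hcomm hpw.2 h2),
      h_trans A hcomm h3 (h_trans A hcomm hpw.1 hqw.2)⟩
  · rintro ⟨h2, h3⟩
    exact ⟨h_trans A hcomm hpw.1 (h_trans A hcomm hqw.2 h2),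
      h_trans A hcomm h3 (h_trans A hcomm hqw.1 hpw.2)⟩
end
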